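/- arXiv:2310.07874 — 5 statements merged into one kernel-verified Lean document; each statement's English description precedes it below -/
import Mathlib

section
/- Let d, k be positive integers, p a real number with 1 ≤ p < ∞, and A a real d × k matrix with σ_min,p(A) = inf{‖Ax‖_p : x ∈ ℝ^k, ‖x‖_p = 1}. Let z ∈ ℝ^k, and let ε_mdl, ε_nq ≥ 0 and vectors e_mdl, e_nq ∈ ℝ^d satisfy ‖e_mdl‖_p ≤ ε_mdl and ‖e_nq‖_p ≤ ε_nq. Set t = Az + e_mdl and b = t + e_nq. Suppose γ ≥ 1 and z̃ ∈ ℝ^k satisfies the relative regression guarantee ‖Az̃ − b‖_p ≤ γ · ‖Az' − b‖_p for every z' ∈ ℝ^k. Then σ_min,p(A) · ‖z − z̃‖_p ≤ (γ + 1)(ε_nq + ε_mdl). -/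
open scoped BigOperators

/-- The ℓ_p norm on `Fin m → ℝ` for a real exponent `p`. -/
noncomputable def pnorm (p : ℝ) {m : ℕ} (x : Fin m → ℝ) : ℝ :=
  (∑ i, |x i| ^ p) ^ (1 / p)

/-!
The residual of `z` is the total error up to sign, so testing the regression guarantee against `z`
bounds both residuals, and the triangle inequality through `b` bounds `A (z - z̃)`. Rescaling to the
unit sphere turns this into a bound on `z - z̃` itself.
-/

section Seminorm

variable {E F : Type*} [AddCommGroup E] [Module ℝ E] [AddCommGroup F] [Module ℝ F]

/-- The minimal modulus `inf {r (f x) | q x = 1}` of a linear map with respect to seminorms `q` on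
its domain and `r` on its codomain; it generalizes `σ_min,p`. If `q` has no unit vectors,
i.e. `q = 0`, the value is `sInf ∅ = 0`. -/
noncomputable def minModulus (q : Seminorm ℝ E) (r : Seminorm ℝ F) (f : E →ₗ[ℝ] F) : ℝ :=
  sInf {s : ℝ | ∃ x : E, q x = 1 ∧ s = r (f x)}

lemma minModulus_le (q : Seminorm ℝ E) (r : Seminorm ℝ F) (f : E →ₗ[ℝ] F) {x : E}
    (hx : q x = 1) : minModulus q r f ≤ r (f x) := by
  refine csInf_le ⟨0, ?_⟩ ⟨x, hx, rfl⟩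
  rintro _ ⟨y, -, rfl⟩
  exact apply_nonneg r (f y)

lemma minModulus_mul_le (q : Seminorm ℝ E) (r : Seminorm ℝ F) (f : E →ₗ[ℝ] F) (x : E) :
    minModulus q r f * q x ≤ r (f x) := by
  rcases (apply_nonneg q x).eq_or_lt with hx | hx
  · rw [← hx, mul_zero]
    exact apply_nonneg r (f x)
  · have norm_scale : ‖(q x)⁻¹‖ = (q x)⁻¹ := Real.norm_of_nonneg (inv_nonneg.2 hx.le)
    have map_scaled : q ((q x)⁻¹ • x) = 1 := by
      rw [map_smul_eq_mul, norm_scale, inv_mul_cancel₀ hx.ne']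
    rw [← le_div_iff₀ hx]
    calc minModulus q r f ≤ r (f ((q x)⁻¹ • x)) := minModulus_le q r f map_scaled
      _ = r (f x) / q x := by
        rw [map_smul, map_smul_eq_mul, norm_scale, inv_mul_eq_div]

lemma map_sub_le_of_map_sub_le_mul {G S : Type*} [AddGroup G] [FunLike S G ℝ]
    [AddGroupSeminormClass S G ℝ] (r : S) {u v b : G} {γ : ℝ}
    (h : r (v - b) ≤ γ * r (u - b)) : r (u - v) ≤ (γ + 1) * r (u - b) :=
  calc r (u - v) ≤ r (u - b) + r (b - v) := le_map_sub_add_map_sub r u b v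
    _ = r (u - b) + r (v - b) := by rw [map_sub_rev r b v]
    _ ≤ (γ + 1) * r (u - b) := by linarith

theorem stmt0_general (q : Seminorm ℝ E) (r : Seminorm ℝ F) (f : E →ₗ[ℝ] F)
    {z ztil : E} {emdl enq b : F} {εmdl εnq γ : ℝ} (hem : r emdl ≤ εmdl) (hen : r enq ≤ εnq)
    (hb : b = f z + emdl + enq) (hγ : -1 ≤ γ) (hreg : r (f ztil - b) ≤ γ * r (f z - b)) :
    minModulus q r f * q (z - ztil) ≤ (γ + 1) * (εnq + εmdl) := by
  have residual : r (f z - b) ≤ εnq + εmdl :=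
    calc r (f z - b) = r (enq + emdl) := by
          rw [← map_neg_eq_map r (enq + emdl), hb]
          congr 1
          abel
      _ ≤ r enq + r emdl := map_add_le_add r enq emdl
      _ ≤ εnq + εmdl := add_le_add hen hem
  calc minModulus q r f * q (z - ztil) ≤ r (f (z - ztil)) := minModulus_mul_le q r f _
    _ = r (f z - f ztil) := by rw [map_sub]
    _ ≤ (γ + 1) * r (f z - b) := map_sub_le_of_map_sub_le_mul r hreg
    _ ≤ (γ + 1) * (εnq + εmdl) := mul_le_mul_of_nonneg_left residual (by linarith)

end Seminorm

section PNorm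

variable {p : ℝ} {m : ℕ}

lemma pnorm_add_le (hp : 1 ≤ p) (x y : Fin m → ℝ) : pnorm p (x + y) ≤ pnorm p x + pnorm p y :=
  Real.Lp_add_le Finset.univ x y hp

lemma pnorm_smul (hp : p ≠ 0) (c : ℝ) (x : Fin m → ℝ) : pnorm p (c • x) = |c| * pnorm p x := by
  have sum_smul : ∑ i, |(c • x) i| ^ p = |c| ^ p * ∑ i, |x i| ^ p := by
    simp only [Pi.smul_apply, smul_eq_mul, abs_mul, Real.mul_rpow (abs_nonneg _) (abs_nonneg _),
      Finset.mul_sum]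
  rw [pnorm, pnorm, sum_smul, Real.mul_rpow (by positivity) (by positivity), one_div,
    Real.rpow_rpow_inv (abs_nonneg c) hp]

/-- The `ℓ_p` norm `pnorm p` on `ℝ^m`, bundled as a seminorm. The exponent stays a real number, so
that the coercion to a function is `pnorm p` by definition. -/
noncomputable def pnormSeminorm (hp : 1 ≤ p) (m : ℕ) : Seminorm ℝ (Fin m → ℝ) :=
  Seminorm.of (pnorm p) (pnorm_add_le hp) (pnorm_smul (zero_lt_one.trans_le hp).ne')

end PNorm

/-- Deterministic core of Theorem 1: error propagation from an approximate
ℓ_p-regression solution to the latent vector. -/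
theorem stmt0 (d k : ℕ) (hd : 0 < d) (hk : 0 < k) (p : ℝ) (hp : 1 ≤ p)
    (A : Matrix (Fin d) (Fin k) ℝ)
    (σ : ℝ)
    (hσ : σ = sInf {r : ℝ | ∃ x : Fin k → ℝ, pnorm p x = 1 ∧ r = pnorm p (A.mulVec x)})
    (z ztil : Fin k → ℝ) (εmdl εnq : ℝ) (hεmdl : 0 ≤ εmdl) (hεnq : 0 ≤ εnq)
    (emdl enq : Fin d → ℝ) (hem : pnorm p emdl ≤ εmdl) (hen : pnorm p enq ≤ εnq)
    (t b : Fin d → ℝ) (ht : t = A.mulVec z + emdl) (hb : b = t + enq)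
    (γ : ℝ) (hγ : 1 ≤ γ)
    (hreg : ∀ z' : Fin k → ℝ, pnorm p (A.mulVec ztil - b) ≤ γ * pnorm p (A.mulVec z' - b)) :
    σ * pnorm p (z - ztil) ≤ (γ + 1) * (εnq + εmdl) := by
  subst hσ ht
  exact stmt0_general (pnormSeminorm hp k) (pnormSeminorm hp d) A.mulVecLin hem hen hb
    (by linarith) (hreg z)
end

section
/- Let k be a positive integer, 1 ≤ p < ∞ a real number, δ > 0, and ℓ ∈ [0, δ]^k, and let r^{(ℓ,δ)} : ℝ^k → ℝ^k be the rounding map r^{(ℓ,δ)}_i(x) = max(⌊(x_i − ℓ_i)/δ⌋·δ + ℓ_i, 0). Let S ⊆ [0,1]^k be a nonempty set, let x ∈ [0,1]^k, and let w ∈ S be a minimizer of the ℓ_p distance from x to S, i.e., ‖x − w‖_p ≤ ‖x − z‖_p for all z ∈ S. Then ‖x − r^{(ℓ,δ)}(w)‖_p ≤ 2·k^{1/p}·δ + inf{‖x − y‖_p : y ∈ r^{(ℓ,δ)}(S)}, where r^{(ℓ,δ)}(S) denotes the image of S under r^{(ℓ,δ)}. -/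
open scoped BigOperators

/-- The coordinatewise rounding map `r^{(ℓ,δ)}`. -/
noncomputable def rnd {k : ℕ} (δ : ℝ) (ℓ : Fin k → ℝ) (x : Fin k → ℝ) : Fin k → ℝ :=
  fun i => max ((⌊(x i - ℓ i) / δ⌋ : ℝ) * δ + ℓ i) 0

/-!
Rounding moves a nonnegative point by at most `δ` in each coordinate, hence by at most `k^{1/p} δ`
in `ℓ_p`. A map that moves every point of `S` by at most `ε` changes both the distance from `x` to
the nearest point and the distance from `x` to any competitor by at most `ε`, so the image of the
nearest point is at most `2ε` farther from `x` than the nearest point of the image.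
-/

theorem dist_le_two_mul_add_infDist_image {α X : Type*} [PseudoMetricSpace X] {e f : α → X}
    {S : Set α} {x : X} {w : α} {ε : ℝ} (hw : w ∈ S)
    (hmin : IsMinOn (fun z => dist x (e z)) S w) (hef : ∀ z ∈ S, dist (e z) (f z) ≤ ε) :
    dist x (f w) ≤ 2 * ε + Metric.infDist x (f '' S) := by
  suffices h : dist x (f w) - 2 * ε ≤ Metric.infDist x (f '' S) by linarith
  refine (Metric.le_infDist ⟨f w, Set.mem_image_of_mem f hw⟩).2 ?_
  rintro _ ⟨z, hz, rfl⟩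
  rw [sub_le_iff_le_add]
  calc
    dist x (f w) ≤ dist x (e w) + dist (e w) (f w) := dist_triangle _ _ _
    _ ≤ dist x (e z) + ε := add_le_add (hmin hz) (hef w hw)
    _ ≤ dist x (f z) + dist (e z) (f z) + ε := by gcongr; exact dist_triangle_right _ _ _
    _ ≤ dist x (f z) + ε + ε := by gcongr; exact hef z hz
    _ = dist x (f z) + 2 * ε := by ring

theorem dist_toLp_le {ι : Type*} [Fintype ι] {p : ENNReal} [Fact (1 ≤ p)] {β : ι → Type*}
    [∀ i, PseudoMetricSpace (β i)] (x y : ∀ i, β i) :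
    dist (WithLp.toLp p x) (WithLp.toLp p y) ≤
      (Fintype.card ι : ℝ) ^ (1 / p).toReal * dist x y := by
  simpa only [NNReal.coe_rpow, NNReal.coe_natCast] using
    (PiLp.lipschitzWith_toLp p β).dist_le_mul x y

section PNorm

variable {p : ℝ} {m : ℕ}

theorem pnorm_eq_norm_toLp (hp : 0 < p) (x : Fin m → ℝ) :
    pnorm p x = ‖WithLp.toLp (ENNReal.ofReal p) x‖ := by
  have htoReal : (ENNReal.ofReal p).toReal = p := ENNReal.toReal_ofReal hp.le
  rw [PiLp.norm_eq_sum (htoReal.symm ▸ hp), htoReal]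
  rfl

theorem pnorm_sub_eq_dist_toLp [Fact (1 ≤ ENNReal.ofReal p)] (x y : Fin m → ℝ) :
    pnorm p (x - y) =
      dist (WithLp.toLp (ENNReal.ofReal p) x) (WithLp.toLp (ENNReal.ofReal p) y) := by
  have hp : 1 ≤ p := ENNReal.one_le_ofReal.1 Fact.out
  rw [pnorm_eq_norm_toLp (zero_lt_one.trans_le hp), WithLp.toLp_sub, dist_eq_norm]

theorem sInf_pnorm_sub_eq_infDist_toLp [Fact (1 ≤ ENNReal.ofReal p)] (x : Fin m → ℝ)
    (T : Set (Fin m → ℝ)) :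
    sInf {r : ℝ | ∃ y ∈ T, r = pnorm p (x - y)} =
      Metric.infDist (WithLp.toLp (ENNReal.ofReal p) x)
        (WithLp.toLp (ENNReal.ofReal p) '' T) := by
  rw [Metric.infDist_eq_iInf, ← sInf_image' (f := dist _), Set.image_image]
  simp only [pnorm_sub_eq_dist_toLp, Set.image, eq_comm]

end PNorm

theorem abs_sub_max_floor_div_mul_add_le {K : Type*} [Field K] [LinearOrder K]
    [IsStrictOrderedRing K] [FloorRing K] {δ : K} (hδ : 0 < δ) (a : K) {t : K} (ht : 0 ≤ t) :
    |t - max (⌊(t - a) / δ⌋ * δ + a) 0| ≤ δ := by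
  have hnonneg := Int.sub_floor_div_mul_nonneg (t - a) hδ
  have hlt := Int.sub_floor_div_mul_lt (t - a) hδ
  calc
    |t - max (⌊(t - a) / δ⌋ * δ + a) 0| = |max t 0 - max (⌊(t - a) / δ⌋ * δ + a) 0| := by
      rw [max_eq_left ht]
    _ ≤ |t - (⌊(t - a) / δ⌋ * δ + a)| := abs_max_sub_max_le_abs _ _ _
    _ ≤ δ := abs_le.2 ⟨by linarith, by linarith⟩

section Rounding

variable {δ : ℝ} {k : ℕ}

theorem dist_rnd_le (hδ : 0 < δ) (ℓ : Fin k → ℝ) {x : Fin k → ℝ} (hx : 0 ≤ x) :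
    dist x (rnd δ ℓ x) ≤ δ :=
  (dist_pi_le_iff hδ.le).2 fun i => abs_sub_max_floor_div_mul_add_le hδ (ℓ i) (hx i)

theorem dist_toLp_rnd_le {p : ℝ} [Fact (1 ≤ ENNReal.ofReal p)] (hδ : 0 < δ)
    (ℓ : Fin k → ℝ) {x : Fin k → ℝ} (hx : 0 ≤ x) :
    dist (WithLp.toLp (ENNReal.ofReal p) x) (WithLp.toLp (ENNReal.ofReal p) (rnd δ ℓ x)) ≤
      (k : ℝ) ^ (1 / p) * δ := by
  have hp : 1 ≤ p := ENNReal.one_le_ofReal.1 Fact.out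
  have hexp : (1 / ENNReal.ofReal p).toReal = 1 / p := by
    rw [ENNReal.toReal_div, ENNReal.toReal_one, ENNReal.toReal_ofReal (zero_le_one.trans hp)]
  have hsup := dist_toLp_le (p := ENNReal.ofReal p) x (rnd δ ℓ x)
  rw [Fintype.card_fin, hexp] at hsup
  exact hsup.trans (mul_le_mul_of_nonneg_left (dist_rnd_le hδ ℓ hx) (by positivity))

end Rounding

theorem stmt6_general {k : ℕ} {p : ℝ} (hp : 1 ≤ p) {δ : ℝ} (hδ : 0 < δ) (ℓ : Fin k → ℝ)
    {S : Set (Fin k → ℝ)} (hS : ∀ z ∈ S, 0 ≤ z) (x : Fin k → ℝ) {w : Fin k → ℝ} (hw : w ∈ S)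
    (hmin : ∀ z ∈ S, pnorm p (x - w) ≤ pnorm p (x - z)) :
    pnorm p (x - rnd δ ℓ w) ≤
      2 * (k : ℝ) ^ (1 / p) * δ +
        sInf {r : ℝ | ∃ y ∈ rnd δ ℓ '' S, r = pnorm p (x - y)} := by
  have : Fact (1 ≤ ENNReal.ofReal p) := ⟨ENNReal.one_le_ofReal.2 hp⟩
  simp only [pnorm_sub_eq_dist_toLp] at hmin
  rw [pnorm_sub_eq_dist_toLp, sInf_pnorm_sub_eq_infDist_toLp, Set.image_image, mul_assoc]
  exact dist_le_two_mul_add_infDist_image (e := WithLp.toLp (ENNReal.ofReal p))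
    (f := fun z => WithLp.toLp (ENNReal.ofReal p) (rnd δ ℓ z)) hw (isMinOn_iff.2 hmin)
    fun z hz => dist_toLp_rnd_le hδ ℓ (hS z hz)

/-- Proposition (roundedDownDIst): rounding the nearest point of `S` to `x` yields a
point within `2 k^{1/p} δ` of the ℓ_p distance from `x` to the rounded set. -/
theorem stmt6 (k : ℕ) (hk : 0 < k) (p : ℝ) (hp : 1 ≤ p) (δ : ℝ) (hδ : 0 < δ)
    (ℓ : Fin k → ℝ) (hℓ : ∀ i, ℓ i ∈ Set.Icc 0 δ)
    (S : Set (Fin k → ℝ)) (hS : S.Nonempty)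
    (hScube : S ⊆ Set.univ.pi fun _ : Fin k => Set.Icc (0 : ℝ) 1)
    (x : Fin k → ℝ) (hx : x ∈ Set.univ.pi fun _ : Fin k => Set.Icc (0 : ℝ) 1)
    (w : Fin k → ℝ) (hw : w ∈ S)
    (hmin : ∀ z ∈ S, pnorm p (x - w) ≤ pnorm p (x - z)) :
    pnorm p (x - rnd δ ℓ w) ≤
      2 * (k : ℝ) ^ (1 / p) * δ +
        sInf {r : ℝ | ∃ y ∈ rnd δ ℓ '' S, r = pnorm p (x - y)} :=
  stmt6_general hp hδ ℓ (fun _ hz i => (hScube hz i (Set.mem_univ i)).1) x hw hmin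
end

section
/- Let δ > 0 and, for ℓ ∈ [0,δ], let r^{(ℓ)} : ℝ → ℝ be defined by r^{(ℓ)}(x) = max(⌊(x − ℓ)/δ⌋·δ + ℓ, 0). Then for all x, y ∈ [0,1], the Lebesgue measure of the set {ℓ ∈ [0,δ] : r^{(ℓ)}(x) ≠ r^{(ℓ)}(y)} is at most |x − y|. Equivalently, if ℓ is drawn uniformly from [0,δ], the probability that x and y are rounded to different values is at most |x − y|/δ. -/
open MeasureTheory

/-
The offsets separating `x` and `y` are those for which some point of the grid `ℓ + δℤ` lies between
`x` and `y`. The offsets in `[0, δ]` tile the line under translation by `δℤ`, so unfolding the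
interval between `x` and `y` over the tiles bounds their measure by the length `|x - y|`.
-/

open Set
open scoped Interval Pointwise

theorem measure_inter_setOf_exists_vadd_mem_le {G α : Type*} [AddGroup G] [Countable G]
    [AddAction G α] [MeasurableSpace α] [MeasurableConstVAdd G α] {μ : Measure α}
    [VAddInvariantMeasure G α μ] {s : Set α} (hs : IsAddFundamentalDomain G s μ) (t : Set α) :
    μ (s ∩ {z | ∃ g : G, g +ᵥ z ∈ t}) ≤ μ t := by
  have hcover : s ∩ {z | ∃ g : G, g +ᵥ z ∈ t} ⊆ ⋃ g : G, (g +ᵥ t) ∩ s := by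
    rintro z ⟨hzs, g, hg⟩
    exact mem_iUnion.2 ⟨-g, mem_neg_vadd_set_iff.2 hg, hzs⟩
  calc μ (s ∩ {z | ∃ g : G, g +ᵥ z ∈ t})
      ≤ μ (⋃ g : G, (g +ᵥ t) ∩ s) := measure_mono hcover
    _ ≤ ∑' g : G, μ ((g +ᵥ t) ∩ s) := measure_iUnion_le _
    _ = μ t := (hs.measure_eq_tsum t).symm

theorem exists_intCast_mem_Ioc_iff_floor_lt {R : Type*} [Ring R] [LinearOrder R] [FloorRing R]
    {a b : R} : (∃ k : ℤ, (k : R) ∈ Ioc a b) ↔ ⌊a⌋ < ⌊b⌋ := by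
  simp only [mem_Ioc, ← Int.floor_lt, ← Int.le_floor]
  exact ⟨fun ⟨_, hak, hkb⟩ ↦ hak.trans_le hkb, fun h ↦ ⟨⌊b⌋, h, le_rfl⟩⟩

theorem exists_intCast_mem_uIoc_iff_floor_ne {R : Type*} [Ring R] [LinearOrder R] [FloorRing R]
    {a b : R} : (∃ k : ℤ, (k : R) ∈ Ι a b) ↔ ⌊a⌋ ≠ ⌊b⌋ := by
  simp only [uIoc_eq_union, mem_union, exists_or, exists_intCast_mem_Ioc_iff_floor_lt,
    lt_or_lt_iff_ne]

theorem exists_zsmul_add_mem_uIoc_iff_floor_ne {K : Type*} [Field K] [LinearOrder K]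
    [IsStrictOrderedRing K] [FloorRing K] {δ : K} (hδ : 0 < δ) {ℓ x y : K} :
    (∃ k : ℤ, k • δ + ℓ ∈ Ι x y) ↔ ⌊(x - ℓ) / δ⌋ ≠ ⌊(y - ℓ) / δ⌋ := by
  simp only [← exists_intCast_mem_uIoc_iff_floor_ne, mem_uIoc, div_lt_iff₀ hδ, le_div_iff₀ hδ,
    sub_lt_iff_lt_add, le_sub_iff_add_le, zsmul_eq_mul]

theorem volume_Icc_inter_setOf_floor_ne_le {δ : ℝ} (hδ : 0 < δ) (a x y : ℝ) :
    volume (Icc a (a + δ) ∩ {ℓ | ⌊(x - ℓ) / δ⌋ ≠ ⌊(y - ℓ) / δ⌋}) ≤ ENNReal.ofReal |x - y| := by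
  have horbit (ℓ : ℝ) : ⌊(x - ℓ) / δ⌋ ≠ ⌊(y - ℓ) / δ⌋ ↔
      ∃ g : AddSubgroup.zmultiples δ, g +ᵥ ℓ ∈ Ι x y := by
    simp only [← exists_zsmul_add_mem_uIoc_iff_floor_ne hδ, Subtype.exists, exists_prop,
      AddSubgroup.exists_mem_zmultiples, AddSubgroup.mk_vadd, vadd_eq_add]
  simp only [horbit]
  calc volume (Icc a (a + δ) ∩ {ℓ | ∃ g : AddSubgroup.zmultiples δ, g +ᵥ ℓ ∈ Ι x y})
      = volume (Ioc a (a + δ) ∩ {ℓ | ∃ g : AddSubgroup.zmultiples δ, g +ᵥ ℓ ∈ Ι x y}) :=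
        measure_congr (Ioc_ae_eq_Icc.symm.inter .rfl)
    _ ≤ volume (Ι x y) :=
        measure_inter_setOf_exists_vadd_mem_le (isAddFundamentalDomain_Ioc hδ a) _
    _ = ENNReal.ofReal |x - y| := by rw [Real.volume_uIoc, abs_sub_comm]

theorem stmt11_general (δ : ℝ) (hδ : 0 < δ)
    (r : ℝ → ℝ → ℝ) (hr : ∀ ℓ x : ℝ, r ℓ x = max ((⌊(x - ℓ) / δ⌋ : ℝ) * δ + ℓ) 0) (x y : ℝ) :
    volume {ℓ ∈ Icc 0 δ | r ℓ x ≠ r ℓ y} ≤ ENNReal.ofReal |x - y| := by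
  have hfloor : {ℓ ∈ Icc 0 δ | r ℓ x ≠ r ℓ y} ⊆
      Icc 0 (0 + δ) ∩ {ℓ | ⌊(x - ℓ) / δ⌋ ≠ ⌊(y - ℓ) / δ⌋} := by
    rintro ℓ ⟨hℓ, hne⟩
    exact ⟨by rwa [zero_add], fun h ↦ hne (by rw [hr, hr, h])⟩
  exact (measure_mono hfloor).trans (volume_Icc_inter_setOf_floor_ne_le hδ 0 x y)

/-- Per-coordinate separation bound for a uniformly random grid offset: the set of
offsets `ℓ ∈ [0,δ]` for which `x` and `y` round to different grid points has Lebesgue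
measure at most `|x - y|`. -/
theorem stmt11 (δ : ℝ) (hδ : 0 < δ)
    (r : ℝ → ℝ → ℝ) (hr : ∀ ℓ x : ℝ, r ℓ x = max ((⌊(x - ℓ) / δ⌋ : ℝ) * δ + ℓ) 0)
    (x y : ℝ) (hx : x ∈ Set.Icc (0 : ℝ) 1) (hy : y ∈ Set.Icc (0 : ℝ) 1) :
    volume {ℓ ∈ Set.Icc 0 δ | r ℓ x ≠ r ℓ y} ≤ ENNReal.ofReal |x - y| :=
  stmt11_general δ hδ r hr x y
end

section
/- Let k be a positive integer, 1 ≤ p < ∞ a real number, δ > 0, and ε ≥ 0. For ℓ ∈ [0,δ]^k let r^{(ℓ,δ)} : ℝ^k → ℝ^k be the rounding map r^{(ℓ,δ)}_i(x) = max(⌊(x_i − ℓ_i)/δ⌋·δ + ℓ_i, 0). Let γ be a Borel probability measure on [0,1]^k × [0,1]^k such that γ({(x,y) : ‖x − y‖_p > ε}) ≤ ε. Then, averaging over ℓ drawn uniformly from [0,δ]^k, (1/δ^k)·∫_{[0,δ]^k} γ({(x,y) : r^{(ℓ,δ)}(x) ≠ r^{(ℓ,δ)}(y)}) dℓ ≤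 (1 + k^{1−1/p}/δ)·ε. -/
open scoped BigOperators
open MeasureTheory

/-!
Two points `x` and `y` round differently in coordinate `i` only if a line of the grid `ℓ i + δℤ`
separates `x i` from `y i`. For uniform `ℓ i ∈ [0, δ]` this has probability at most
`|x i - y i| / δ`, because the parts of the `δℤ`-translates of an interval that lie in a fixed
period have total length equal to that of the interval. A union bound over the coordinates and the
power mean inequality `‖v‖₁ ≤ k ^ (1 - 1/p) ‖v‖_p` bound the probability over `ℓ` for a fixed pair.
By Tonelli, it remains to average over the pair, where this bound is used on `‖x - y‖_p ≤ ε` and the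
trivial bound `1` on the complementary event, of probability at most `ε`.
-/

open Set
open scoped ENNReal Pointwise ProbabilityTheory

lemma cond_univ_pi {ι : Type*} [Fintype ι] {α : ι → Type*} [∀ i, MeasurableSpace (α i)]
    (μ : ∀ i, Measure (α i)) [∀ i, SigmaFinite (μ i)] {s : ∀ i, Set (α i)}
    (hs : ∀ i, μ i (s i) ≠ ∞) :
    (Measure.pi μ)[|univ.pi s] = Measure.pi fun i => (μ i)[|s i] := by
  refine (Measure.pi_eq fun t _ => ?_).symm
  simp only [ProbabilityTheory.cond, Measure.smul_apply, smul_eq_mul, Measure.restrict_pi_pi,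
    Measure.pi_pi, Finset.prod_mul_distrib]
  rw [ENNReal.prod_inv_distrib fun i _ j _ _ => Or.inr (hs j)]

lemma lintegral_measure_setOf_swap {α β : Type*} [MeasurableSpace α] [MeasurableSpace β]
    (μ : Measure α) (ν : Measure β) [SFinite μ] [SFinite ν] {r : α → β → Prop}
    (hr : MeasurableSet {z : α × β | r z.1 z.2}) :
    ∫⁻ x, ν {y | r x y} ∂μ = ∫⁻ y, μ {x | r x y} ∂ν :=
  (Measure.prod_apply hr).symm.trans (Measure.prod_apply_symm hr)

lemma lintegral_le_measure_add_of_le_one {α : Type*} [MeasurableSpace α] {μ : Measure α}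
    [IsProbabilityMeasure μ] {f : α → ℝ≥0∞} {s : Set α} {c : ℝ≥0∞}
    (hf : ∀ x ∈ s, f x ≤ 1) (hc : ∀ x ∉ s, f x ≤ c) :
    ∫⁻ x, f x ∂μ ≤ μ s + c := by
  have hle : ∀ x, f x ≤ s.indicator 1 x + c := fun x => by
    by_cases hx : x ∈ s
    · simpa [hx] using (hf x hx).trans le_self_add
    · simpa [hx] using hc x hx
  calc ∫⁻ x, f x ∂μ
      ≤ ∫⁻ x, (s.indicator 1 x + c) ∂μ := lintegral_mono hle
    _ = ∫⁻ x, s.indicator 1 x ∂μ + c := by simp [lintegral_add_right _ measurable_const]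
    _ ≤ μ s + c := by gcongr; exact lintegral_indicator_one_le s

section Floor

variable {δ : ℝ}

lemma exists_int_mul_add_mem_uIoc_of_floor_ne (hδ : 0 < δ) {a b t : ℝ}
    (h : ⌊(a - t) / δ⌋ ≠ ⌊(b - t) / δ⌋) : ∃ n : ℤ, n * δ + t ∈ uIoc a b := by
  wlog hlt : ⌊(a - t) / δ⌋ < ⌊(b - t) / δ⌋ generalizing a b
  · rw [uIoc_comm]
    exact this h.symm (h.lt_or_gt.resolve_left hlt)
  have ha := Int.floor_lt.mp hlt
  have hb := Int.floor_le ((b - t) / δ)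
  rw [div_lt_iff₀ hδ] at ha
  rw [le_div_iff₀ hδ] at hb
  exact ⟨⌊(b - t) / δ⌋, mem_uIoc.mpr (Or.inl ⟨by linarith, by linarith⟩)⟩

lemma volume_floor_ne_inter_Ioc_le (hδ : 0 < δ) (a b s : ℝ) :
    volume ({t | ⌊(a - t) / δ⌋ ≠ ⌊(b - t) / δ⌋} ∩ Ioc s (s + δ)) ≤ ENNReal.ofReal |a - b| := by
  have hcover : {t | ⌊(a - t) / δ⌋ ≠ ⌊(b - t) / δ⌋} ⊆
      ⋃ g : AddSubgroup.zmultiples δ, g +ᵥ uIoc a b := fun t ht => by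
    obtain ⟨n, hn⟩ := exists_int_mul_add_mem_uIoc_of_floor_ne hδ ht
    refine mem_iUnion.mpr ⟨-⟨n • δ, n, rfl⟩, mem_vadd_set_iff_neg_vadd_mem.mpr ?_⟩
    simpa [AddSubgroup.vadd_def] using hn
  calc volume ({t | ⌊(a - t) / δ⌋ ≠ ⌊(b - t) / δ⌋} ∩ Ioc s (s + δ))
      ≤ volume (⋃ g : AddSubgroup.zmultiples δ, (g +ᵥ uIoc a b) ∩ Ioc s (s + δ)) := by
        rw [← iUnion_inter]
        gcongr
    _ ≤ ∑' g : AddSubgroup.zmultiples δ, volume ((g +ᵥ uIoc a b) ∩ Ioc s (s + δ)) :=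
        measure_iUnion_le _
    _ = volume (uIoc a b) := ((isAddFundamentalDomain_Ioc hδ s).measure_eq_tsum _).symm
    _ = ENNReal.ofReal |a - b| := by rw [Real.volume_uIoc, abs_sub_comm]

lemma cond_Icc_floor_ne_le (hδ : 0 < δ) (a b : ℝ) :
    volume[|Icc 0 δ] {t | ⌊(a - t) / δ⌋ ≠ ⌊(b - t) / δ⌋} ≤ ENNReal.ofReal (|a - b| / δ) := by
  rw [ENNReal.ofReal_div_of_pos hδ, ENNReal.div_eq_inv_mul,
    ProbabilityTheory.cond_apply measurableSet_Icc, Real.volume_Icc, sub_zero, inter_comm]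
  gcongr
  calc volume ({t | ⌊(a - t) / δ⌋ ≠ ⌊(b - t) / δ⌋} ∩ Icc 0 δ)
      = volume ({t | ⌊(a - t) / δ⌋ ≠ ⌊(b - t) / δ⌋} ∩ Ioc 0 δ) :=
        measure_congr ((ae_eq_refl _).inter Ioc_ae_eq_Icc.symm)
    _ ≤ ENNReal.ofReal |a - b| := by simpa using volume_floor_ne_inter_Ioc_le hδ a b 0

end Floor

lemma sum_abs_le_rpow_mul_pnorm {k : ℕ} {p : ℝ} (hp : 1 ≤ p) (x : Fin k → ℝ) :
    ∑ i, |x i| ≤ (k : ℝ) ^ (1 - 1 / p) * pnorm p x := by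
  have hp₀ : 0 < p := by positivity
  have hpower : (∑ i, |x i|) ^ p ≤ (k : ℝ) ^ (p - 1) * ∑ i, |x i| ^ p := by
    simpa using Real.rpow_sum_le_const_mul_sum_rpow Finset.univ x hp
  calc ∑ i, |x i|
      = ((∑ i, |x i|) ^ p) ^ (1 / p) := by
        rw [one_div, Real.rpow_rpow_inv (by positivity) hp₀.ne']
    _ ≤ ((k : ℝ) ^ (p - 1) * ∑ i, |x i| ^ p) ^ (1 / p) := by gcongr
    _ = (k : ℝ) ^ ((p - 1) * (1 / p)) * pnorm p x := by
        rw [Real.mul_rpow (by positivity) (by positivity), ← Real.rpow_mul (by positivity), pnorm]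
    _ = (k : ℝ) ^ (1 - 1 / p) * pnorm p x := by
        rw [sub_mul, one_mul, mul_one_div_cancel hp₀.ne']

/-- The uniform distribution on `[0, δ]^k`, from which the grid offset `ℓ` of `rnd δ ℓ` is drawn.
It is encoded as Lebesgue measure conditioned on the cube, which is a probability measure when
`0 < δ` and the zero measure when `δ ≤ 0 < k`. -/
noncomputable def offsetMeasure (k : ℕ) (δ : ℝ) : Measure (Fin k → ℝ) :=
  volume[|univ.pi fun _ => Icc 0 δ]

section Offset

variable {k : ℕ} {δ : ℝ}

instance : IsZeroOrProbabilityMeasure (offsetMeasure k δ) :=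
  inferInstanceAs (IsZeroOrProbabilityMeasure volume[|_])

lemma offsetMeasure_eq_pi (k : ℕ) (δ : ℝ) :
    offsetMeasure k δ = Measure.pi fun _ => volume[|Icc 0 δ] :=
  cond_univ_pi _ fun _ => measure_Icc_lt_top.ne

lemma lintegral_offsetMeasure (hδ : 0 < δ) (f : (Fin k → ℝ) → ℝ≥0∞) :
    ∫⁻ ℓ, f ℓ ∂offsetMeasure k δ =
      ENNReal.ofReal (1 / δ ^ k) * ∫⁻ ℓ in univ.pi fun _ => Icc 0 δ, f ℓ := by
  have hvol : (volume (univ.pi fun _ : Fin k => Icc 0 δ))⁻¹ = ENNReal.ofReal (1 / δ ^ k) := by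
    rw [volume_pi_pi, one_div, ENNReal.ofReal_inv_of_pos (by positivity)]
    simp [ENNReal.ofReal_pow hδ.le]
  rw [offsetMeasure, ProbabilityTheory.cond, lintegral_smul_measure, hvol, smul_eq_mul]

lemma offsetMeasure_eval_mem_le (hδ : 0 < δ) (i : Fin k) (s : Set ℝ) :
    offsetMeasure k δ {ℓ | ℓ i ∈ s} ≤ volume[|Icc 0 δ] s := by
  have : IsProbabilityMeasure (volume[|Icc 0 δ]) :=
    ProbabilityTheory.cond_isProbabilityMeasure_of_finite (by simpa using hδ) measure_Icc_lt_top.ne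
  rw [offsetMeasure_eq_pi]
  exact (measurePreserving_eval (fun _ : Fin k => volume[|Icc 0 δ]) i).measure_preimage_le s

lemma offsetMeasure_rnd_ne_le (hδ : 0 < δ) (x y : Fin k → ℝ) :
    offsetMeasure k δ {ℓ | rnd δ ℓ x ≠ rnd δ ℓ y} ≤ ENNReal.ofReal ((∑ i, |x i - y i|) / δ) := by
  have hsub : {ℓ | rnd δ ℓ x ≠ rnd δ ℓ y} ⊆
      ⋃ i, {ℓ | ⌊(x i - ℓ i) / δ⌋ ≠ ⌊(y i - ℓ i) / δ⌋} := fun ℓ hℓ => by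
    obtain ⟨i, hi⟩ := Function.ne_iff.mp hℓ
    exact mem_iUnion.mpr ⟨i, fun hfloor => hi (by simp only [rnd, hfloor])⟩
  calc offsetMeasure k δ {ℓ | rnd δ ℓ x ≠ rnd δ ℓ y}
      ≤ ∑ i, offsetMeasure k δ {ℓ | ⌊(x i - ℓ i) / δ⌋ ≠ ⌊(y i - ℓ i) / δ⌋} :=
        (measure_mono hsub).trans (measure_iUnion_fintype_le _ _)
    _ ≤ ∑ i, ENNReal.ofReal (|x i - y i| / δ) := Finset.sum_le_sum fun i _ =>
        (offsetMeasure_eval_mem_le hδ i {t | ⌊(x i - t) / δ⌋ ≠ ⌊(y i - t) / δ⌋}).trans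
          (cond_Icc_floor_ne_le hδ _ _)
    _ = ENNReal.ofReal ((∑ i, |x i - y i|) / δ) := by
        rw [Finset.sum_div, ENNReal.ofReal_sum_of_nonneg fun i _ => by positivity]

lemma offsetMeasure_rnd_ne_le_of_pnorm_le {p ε : ℝ} (hp : 1 ≤ p) (hδ : 0 < δ) {x y : Fin k → ℝ}
    (hxy : pnorm p (x - y) ≤ ε) :
    offsetMeasure k δ {ℓ | rnd δ ℓ x ≠ rnd δ ℓ y} ≤
      ENNReal.ofReal ((k : ℝ) ^ (1 - 1 / p) / δ * ε) := by
  refine (offsetMeasure_rnd_ne_le hδ x y).trans (ENNReal.ofReal_le_ofReal ?_)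
  calc (∑ i, |x i - y i|) / δ
      ≤ (k : ℝ) ^ (1 - 1 / p) * pnorm p (x - y) / δ := by
        gcongr
        exact sum_abs_le_rpow_mul_pnorm hp (x - y)
    _ ≤ (k : ℝ) ^ (1 - 1 / p) * ε / δ := by gcongr
    _ = (k : ℝ) ^ (1 - 1 / p) / δ * ε := by ring

@[fun_prop]
lemma measurable_rnd {α : Type*} [MeasurableSpace α] {f g : α → Fin k → ℝ}
    (hf : Measurable f) (hg : Measurable g) : Measurable fun a => rnd δ (f a) (g a) := by
  unfold rnd
  fun_prop

lemma lintegral_measure_rnd_ne (γ : Measure ((Fin k → ℝ) × (Fin k → ℝ))) [SFinite γ] :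
    ∫⁻ ℓ, γ {q | rnd δ ℓ q.1 ≠ rnd δ ℓ q.2} ∂offsetMeasure k δ =
      ∫⁻ q, offsetMeasure k δ {ℓ | rnd δ ℓ q.1 ≠ rnd δ ℓ q.2} ∂γ := by
  have hx : Measurable fun z : (Fin k → ℝ) × (Fin k → ℝ) × (Fin k → ℝ) => rnd δ z.1 z.2.1 := by
    fun_prop
  have hy : Measurable fun z : (Fin k → ℝ) × (Fin k → ℝ) × (Fin k → ℝ) => rnd δ z.1 z.2.2 := by
    fun_prop
  exact lintegral_measure_setOf_swap _ γ (measurableSet_eq_fun hx hy).compl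

end Offset

theorem stmt12_general {k : ℕ} {p : ℝ} (hp : 1 ≤ p) {δ ε : ℝ} (hδ : 0 < δ) (hε : 0 ≤ ε)
    (γ : Measure ((Fin k → ℝ) × (Fin k → ℝ))) [IsProbabilityMeasure γ]
    (hγ : γ {q | ε < pnorm p (q.1 - q.2)} ≤ ENNReal.ofReal ε) :
    ENNReal.ofReal (1 / δ ^ k) *
        ∫⁻ ℓ in univ.pi fun _ : Fin k => Icc (0 : ℝ) δ, γ {q | rnd δ ℓ q.1 ≠ rnd δ ℓ q.2} ≤
      ENNReal.ofReal ((1 + (k : ℝ) ^ (1 - 1 / p) / δ) * ε) := by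
  rw [← lintegral_offsetMeasure hδ, lintegral_measure_rnd_ne]
  calc ∫⁻ q, offsetMeasure k δ {ℓ | rnd δ ℓ q.1 ≠ rnd δ ℓ q.2} ∂γ
      ≤ γ {q | ε < pnorm p (q.1 - q.2)} + ENNReal.ofReal ((k : ℝ) ^ (1 - 1 / p) / δ * ε) :=
        lintegral_le_measure_add_of_le_one (fun _ _ => prob_le_one) fun _ hq =>
          offsetMeasure_rnd_ne_le_of_pnorm_le hp hδ (not_lt.mp hq)
    _ ≤ ENNReal.ofReal ε + ENNReal.ofReal ((k : ℝ) ^ (1 - 1 / p) / δ * ε) := by gcongr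
    _ = ENNReal.ofReal ((1 + (k : ℝ) ^ (1 - 1 / p) / δ) * ε) := by
        rw [← ENNReal.ofReal_add hε (by positivity), add_mul, one_mul]

/-- Central estimate of Lemma (TVdistanceBound): given a coupling `γ` on
`[0,1]^k × [0,1]^k` witnessing Prokhorov closeness `ε`, a uniformly random grid offset
`ℓ ∈ [0,δ]^k` makes the two coordinates round differently with probability at most
`(1 + k^{1-1/p}/δ) ε`. -/
theorem stmt12 (k : ℕ) (hk : 0 < k) (p : ℝ) (hp : 1 ≤ p) (δ ε : ℝ) (hδ : 0 < δ)
    (hε : 0 ≤ ε)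
    (γ : Measure ((Fin k → ℝ) × (Fin k → ℝ))) [IsProbabilityMeasure γ]
    (hγcube : γ ((Set.univ.pi fun _ : Fin k => Set.Icc (0 : ℝ) 1) ×ˢ
      (Set.univ.pi fun _ : Fin k => Set.Icc (0 : ℝ) 1)) = 1)
    (hγ : γ {q | ε < pnorm p (q.1 - q.2)} ≤ ENNReal.ofReal ε) :
    ENNReal.ofReal (1 / δ ^ k) *
        ∫⁻ ℓ in Set.univ.pi fun _ : Fin k => Set.Icc (0 : ℝ) δ,
          γ {q | rnd δ ℓ q.1 ≠ rnd δ ℓ q.2} ≤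
      ENNReal.ofReal ((1 + (k : ℝ) ^ (1 - 1 / p) / δ) * ε) :=
  stmt12_general hp hδ hε γ hγ
end

section
/- Let d, k, s be positive integers with k ≤ s. Let A be a real d × k matrix, S a real s × d 'sampling' matrix each of whose rows is a standard basis vector of ℝ^d (for every row index i there exists j ∈ {1,…,d} with S_{i,·} = e_jᵀ), and D a real s × s diagonal matrix. Set B = D·S·A and assume BᵀB is invertible. Let z ∈ ℝ^k, ε_mdl, ε_nq ≥ 0, and t, e ∈ ℝ^d with ‖t − Az‖_∞ ≤ ε_mdl and ‖e‖_∞ ≤ ε_nq. Define z̃ = (BᵀB)⁻¹·Bᵀ·D·S·(t + e). Then ‖z̃ − z‖_∞ ≤ √s·(ε_nq + ε_mdl)·σ_min(B)⁻¹·‖D‖_∞, where σ_min(B) = min{‖Bx‖_2 : x ∈ ℝ^k, ‖x‖_2 = 1} is the smallest singular value of B (which is positive since BᵀB is invertible), and ‖D‖_∞ = max_i Σ_j |D_{ij}| is the maximum absolute row sum of D. -/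
open scoped BigOperators
open Matrix

/-- The ℓ_∞ norm on `Fin m → ℝ`. -/
noncomputable def linf {m : ℕ} (x : Fin m → ℝ) : ℝ := ⨆ i, |x i|

/-- The ℓ_2 norm on `Fin m → ℝ`. -/
noncomputable def l2norm {m : ℕ} (x : Fin m → ℝ) : ℝ := Real.sqrt (∑ i, x i ^ 2)

/-!
The map `w ↦ (Bᴴ B)⁻¹ Bᴴ w` is linear and recovers `z` from `B z`, so the error of the estimate is
the least-squares solution `x` for the residual `D S (e + (t - A z))`. The normal equations say that
`B x` is the orthogonal projection of this residual onto the range of `B`; hence `B x` is no longer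
than the residual, and `x` is longer than `B x` by a factor of at most `σ_min(B)⁻¹`. The residual
itself is estimated in `ℓ_∞`, where `S` does not expand and `D` expands by at most `‖D‖_∞`, and `√s`
is the price of passing to `ℓ_2`.
-/

section SigmaMin

variable {𝕜 E F : Type*} [RCLike 𝕜] [NormedAddCommGroup E] [NormedSpace 𝕜 E]
  [NormedAddCommGroup F] [NormedSpace 𝕜 F]

/-- The smallest singular value of a linear map, in the variational form `inf {‖T x‖ : ‖x‖ = 1}`,
which measures how far `T` is from collapsing a direction. If `E` is trivial, the infimum is over
the empty set and equals `0`. -/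
noncomputable def sigmaMin (T : E →ₗ[𝕜] F) : ℝ := ⨅ x : Metric.sphere (0 : E) 1, ‖T x‖

theorem sigmaMin_nonneg (T : E →ₗ[𝕜] F) : 0 ≤ sigmaMin T :=
  Real.iInf_nonneg fun _ ↦ norm_nonneg _

theorem sigmaMin_mul_norm_le (T : E →ₗ[𝕜] F) (x : E) : sigmaMin T * ‖x‖ ≤ ‖T x‖ := by
  rcases eq_or_ne x 0 with rfl | hx
  · simp
  have hmem : ((‖x‖⁻¹ : 𝕜) • x) ∈ Metric.sphere (0 : E) 1 := by
    rw [mem_sphere_zero_iff_norm, norm_smul_inv_norm hx]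
  have hbdd : BddBelow (Set.range fun y : Metric.sphere (0 : E) 1 ↦ ‖T y‖) :=
    ⟨0, Set.forall_mem_range.2 fun _ ↦ norm_nonneg _⟩
  rw [← le_div_iff₀ (norm_pos_iff.2 hx)]
  calc sigmaMin T ≤ ‖T ((‖x‖⁻¹ : 𝕜) • x)‖ := ciInf_le hbdd ⟨_, hmem⟩
    _ = ‖T x‖ / ‖x‖ := by
      rw [map_smul, norm_smul, norm_inv, RCLike.norm_ofReal, abs_norm, div_eq_inv_mul]

theorem sigmaMin_pos [FiniteDimensional 𝕜 E] [Nontrivial E] {T : E →ₗ[𝕜] F}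
    (hT : Function.Injective T) : 0 < sigmaMin T := by
  obtain ⟨K, hK, hlip⟩ := T.injective_iff_antilipschitz.1 hT
  have : Nonempty (Metric.sphere (0 : E) 1) := NormedSpace.sphere_nonempty_rclike 𝕜 zero_le_one
  have hK_le : (K : ℝ)⁻¹ ≤ sigmaMin T := le_ciInf fun x ↦ by
    have hx := ZeroHomClass.bound_of_antilipschitz T hlip x
    rwa [norm_eq_of_mem_sphere, ← inv_le_iff_one_le_mul₀' (by positivity)] at hx
  exact (by positivity : (0 : ℝ) < (K : ℝ)⁻¹).trans_le hK_le

end SigmaMin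

theorem norm_le_norm_of_inner_self_eq {𝕜 E : Type*} [RCLike 𝕜] [SeminormedAddCommGroup E]
    [InnerProductSpace 𝕜 E] {u w : E} (h : inner 𝕜 u u = inner 𝕜 u w) : ‖u‖ ≤ ‖w‖ := by
  have hsq : ‖u‖ * ‖u‖ ≤ ‖u‖ * ‖w‖ := by
    rw [← inner_self_eq_norm_mul_norm (𝕜 := 𝕜), h]
    exact re_inner_le_norm u w
  rcases (norm_nonneg u).eq_or_lt with hu | hu
  · exact hu ▸ norm_nonneg w
  · exact le_of_mul_le_mul_left hsq hu

theorem norm_toLp_two_le_sqrt_card_mul_norm {ι E : Type*} [Fintype ι] [SeminormedAddCommGroup E]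
    (x : ι → E) : ‖WithLp.toLp 2 x‖ ≤ √(Fintype.card ι) * ‖x‖ := by
  simpa [Real.sqrt_eq_rpow] using
    (PiLp.lipschitzWith_toLp 2 fun _ : ι ↦ E).norm_le_mul (WithLp.toLp_zero 2) x

theorem norm_le_norm_toLp (p : ENNReal) [Fact (1 ≤ p)] {ι E : Type*} [Fintype ι]
    [SeminormedAddCommGroup E] (x : ι → E) : ‖x‖ ≤ ‖WithLp.toLp p x‖ :=
  (pi_norm_le_iff_of_nonneg (norm_nonneg _)).2 (PiLp.norm_apply_le (WithLp.toLp p x))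

section LeftPinv

variable {R m n : Type*} [CommRing R] [StarRing R] [Fintype m] [Fintype n] [DecidableEq n]

/-- The matrix `(Bᴴ B)⁻¹ Bᴴ` sending `w` to the least-squares solution of `B x = w`; over `ℝ` or `ℂ`
it is the Moore–Penrose inverse of a `B` of full column rank. It is zero if `Bᴴ B` is singular. -/
noncomputable def leftPinv (B : Matrix m n R) : Matrix n m R := (Bᴴ * B)⁻¹ * Bᴴ

theorem leftPinv_mul_self {B : Matrix m n R} (hB : IsUnit (Bᴴ * B)) : leftPinv B * B = 1 := by
  rw [leftPinv, Matrix.mul_assoc, nonsing_inv_mul _ ((isUnit_iff_isUnit_det _).1 hB)]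

theorem conjTranspose_mul_mul_leftPinv {B : Matrix m n R} (hB : IsUnit (Bᴴ * B)) :
    Bᴴ * (B * leftPinv B) = Bᴴ := by
  rw [leftPinv, ← Matrix.mul_assoc,
    mul_nonsing_inv_cancel_left _ _ ((isUnit_iff_isUnit_det _).1 hB)]

theorem leftPinv_mulVec_sub {B : Matrix m n R} (hB : IsUnit (Bᴴ * B)) (w : m → R) (z : n → R) :
    leftPinv B *ᵥ w - z = leftPinv B *ᵥ (w - B *ᵥ z) := by
  rw [mulVec_sub, mulVec_mulVec, leftPinv_mul_self hB, one_mulVec]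

end LeftPinv

section LeastSquares

variable {𝕜 m n : Type*} [RCLike 𝕜] [Fintype m] [Fintype n] [DecidableEq n] {B : Matrix m n 𝕜}

theorem toEuclideanLin_injective (hB : IsUnit (Bᴴ * B)) :
    Function.Injective (toEuclideanLin B) := by
  intro x y hxy
  have h : B *ᵥ x.ofLp = B *ᵥ y.ofLp := congrArg WithLp.ofLp hxy
  apply WithLp.ofLp_injective 2
  simpa only [mulVec_mulVec, leftPinv_mul_self hB, one_mulVec] using congrArg (leftPinv B *ᵥ ·) h

theorem norm_mulVec_leftPinv_mulVec_le (hB : IsUnit (Bᴴ * B)) (w : m → 𝕜) :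
    ‖WithLp.toLp 2 (B *ᵥ (leftPinv B *ᵥ w))‖ ≤ ‖WithLp.toLp 2 w‖ := by
  have hnormal : Bᴴ *ᵥ (B *ᵥ (leftPinv B *ᵥ w)) = Bᴴ *ᵥ w := by
    rw [mulVec_mulVec, mulVec_mulVec, Matrix.mul_assoc, conjTranspose_mul_mul_leftPinv hB]
  have hadjoint (x : n → 𝕜) (y : m → 𝕜) : y ⬝ᵥ star (B *ᵥ x) = star x ⬝ᵥ Bᴴ *ᵥ y := by
    rw [star_mulVec, dotProduct_comm, dotProduct_mulVec]
  refine norm_le_norm_of_inner_self_eq (𝕜 := 𝕜) ?_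
  rw [EuclideanSpace.inner_toLp_toLp, EuclideanSpace.inner_toLp_toLp, hadjoint, hadjoint, hnormal]

theorem norm_leftPinv_mulVec_le [Nonempty n] (hB : IsUnit (Bᴴ * B)) (w : m → 𝕜) :
    ‖WithLp.toLp 2 (leftPinv B *ᵥ w)‖ ≤ (sigmaMin (toEuclideanLin B))⁻¹ * ‖WithLp.toLp 2 w‖ := by
  have hσ : 0 < sigmaMin (toEuclideanLin B) := sigmaMin_pos (toEuclideanLin_injective hB)
  rw [← div_eq_inv_mul, le_div_iff₀' hσ]
  exact (sigmaMin_mul_norm_le (toEuclideanLin B) _).trans (norm_mulVec_leftPinv_mulVec_le hB w)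

end LeastSquares

theorem linf_eq_norm {m : ℕ} (x : Fin m → ℝ) : linf x = ‖x‖ := by
  rw [Pi.norm_def, Finset.sup_univ_eq_ciSup, NNReal.coe_iSup]
  rfl

theorem l2norm_eq_norm {m : ℕ} (x : Fin m → ℝ) : l2norm x = ‖WithLp.toLp 2 x‖ := by
  simp only [l2norm, EuclideanSpace.norm_eq, Real.norm_eq_abs, sq_abs]

theorem sInf_l2norm_mulVec_eq_sigmaMin {m n : ℕ} (B : Matrix (Fin m) (Fin n) ℝ) :
    sInf {r : ℝ | ∃ x : Fin n → ℝ, l2norm x = 1 ∧ r = l2norm (B *ᵥ x)} =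
      sigmaMin (toEuclideanLin B) := by
  rw [sigmaMin, iInf]
  congr 1
  ext r
  constructor
  · rintro ⟨x, hx, rfl⟩
    rw [l2norm_eq_norm] at hx
    exact ⟨⟨WithLp.toLp 2 x, mem_sphere_zero_iff_norm.2 hx⟩, (l2norm_eq_norm _).symm⟩
  · rintro ⟨x, rfl⟩
    exact ⟨x.1.ofLp, (l2norm_eq_norm _).trans (norm_eq_of_mem_sphere x), (l2norm_eq_norm _).symm⟩

section MatrixNorm

attribute [local instance] Matrix.linftyOpSeminormedAddCommGroup

theorem linfty_opNorm_eq_iSup {m n α : Type*} [Fintype m] [Fintype n] [SeminormedAddCommGroup α]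
    (A : Matrix m n α) : ‖A‖ = ⨆ i, ∑ j, ‖A i j‖ := by
  simp only [linfty_opNorm_def, Finset.sup_univ_eq_ciSup, NNReal.coe_iSup, NNReal.coe_sum,
    coe_nnnorm]

theorem linfty_opNorm_le_one_of_rows_single {m n α : Type*} [Fintype m] [Fintype n]
    [DecidableEq n] [SeminormedRing α] [NormOneClass α] {S : Matrix m n α}
    (hS : ∀ i, ∃ j, ∀ l, S i l = if l = j then 1 else 0) : ‖S‖ ≤ 1 := by
  rw [linfty_opNorm_eq_iSup]
  refine Real.iSup_le (fun i ↦ ?_) zero_le_one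
  obtain ⟨j, hj⟩ := hS i
  simp [hj, apply_ite norm]

theorem stmt14_general {𝕜 l m n p : Type*} [RCLike 𝕜] [Fintype l] [Fintype m] [Fintype n]
    [Fintype p] [DecidableEq p] [Nonempty p] (A : Matrix n p 𝕜) (S : Matrix m n 𝕜) (hS : ‖S‖ ≤ 1)
    (D : Matrix l m 𝕜) {B : Matrix l p 𝕜} (hB : B = D * S * A) (hBinv : IsUnit (Bᴴ * B))
    (z : p → 𝕜) {εmdl εnq : ℝ} (t e : n → 𝕜) (ht : ‖t - A *ᵥ z‖ ≤ εmdl) (he : ‖e‖ ≤ εnq) :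
    ‖WithLp.toLp 2 ((Bᴴ * B)⁻¹ *ᵥ ((Bᴴ * D * S) *ᵥ (t + e)) - z)‖ ≤
      √(Fintype.card l) * (εnq + εmdl) * (sigmaMin (toEuclideanLin B))⁻¹ * ‖D‖ := by
  have hestimate :
      (Bᴴ * B)⁻¹ *ᵥ ((Bᴴ * D * S) *ᵥ (t + e)) = leftPinv B *ᵥ ((D * S) *ᵥ (t + e)) := by
    simp only [leftPinv, mulVec_mulVec, Matrix.mul_assoc]
  have hresidual : (D * S) *ᵥ (t + e) - B *ᵥ z = (D * S) *ᵥ (e + (t - A *ᵥ z)) := by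
    rw [hB, ← mulVec_mulVec z (D * S) A, ← mulVec_sub, add_comm t, add_sub_assoc]
  have hnoise : ‖(D * S) *ᵥ (e + (t - A *ᵥ z))‖ ≤ (εnq + εmdl) * ‖D‖ :=
    calc _ ≤ ‖D * S‖ * ‖e + (t - A *ᵥ z)‖ := linfty_opNorm_mulVec _ _
      _ ≤ ‖D‖ * (εnq + εmdl) := by
        gcongr
        · exact (linfty_opNorm_mul D S).trans (mul_le_of_le_one_right (norm_nonneg D) hS)
        · exact norm_add_le_of_le he ht
      _ = (εnq + εmdl) * ‖D‖ := mul_comm _ _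
  have hσ := inv_nonneg.2 (sigmaMin_nonneg (toEuclideanLin B))
  rw [hestimate, leftPinv_mulVec_sub hBinv, hresidual]
  calc _ ≤ (sigmaMin (toEuclideanLin B))⁻¹ *
          ‖WithLp.toLp 2 ((D * S) *ᵥ (e + (t - A *ᵥ z)))‖ := norm_leftPinv_mulVec_le hBinv _
    _ ≤ (sigmaMin (toEuclideanLin B))⁻¹ * (√(Fintype.card l) * ((εnq + εmdl) * ‖D‖)) := by
        gcongr
        exact (norm_toLp_two_le_sqrt_card_mul_norm _).trans (by gcongr)
    _ = √(Fintype.card l) * (εnq + εmdl) * (sigmaMin (toEuclideanLin B))⁻¹ * ‖D‖ := by ring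

end MatrixNorm

/-- Improved ℓ_∞ recovery bound for the least-squares estimate from sampled, rescaled
noisy queries (Appendix C of the paper):
`‖z̃ - z‖_∞ ≤ √s (ε_nq + ε_mdl) σ_min(B)⁻¹ ‖D‖_∞` where `B = D S A`. -/
theorem stmt14 (d k s : ℕ) (hd : 0 < d) (hk : 0 < k) (hks : k ≤ s)
    (A : Matrix (Fin d) (Fin k) ℝ)
    (S : Matrix (Fin s) (Fin d) ℝ)
    (hS : ∀ i : Fin s, ∃ j : Fin d, ∀ l : Fin d, S i l = if l = j then 1 else 0)
    (D : Matrix (Fin s) (Fin s) ℝ) (hD : ∀ i j : Fin s, i ≠ j → D i j = 0)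
    (B : Matrix (Fin s) (Fin k) ℝ) (hB : B = D * S * A)
    (hBinv : IsUnit (Bᵀ * B))
    (z : Fin k → ℝ) (εmdl εnq : ℝ) (hεm : 0 ≤ εmdl) (hεn : 0 ≤ εnq)
    (t e : Fin d → ℝ) (ht : linf (t - A.mulVec z) ≤ εmdl) (he : linf e ≤ εnq)
    (ztil : Fin k → ℝ)
    (hz : ztil = (Bᵀ * B)⁻¹.mulVec ((Bᵀ * D * S).mulVec (t + e)))
    (σ : ℝ)
    (hσ : σ = sInf {r : ℝ | ∃ x : Fin k → ℝ, l2norm x = 1 ∧ r = l2norm (B.mulVec x)})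
    (Dnorm : ℝ) (hDnorm : Dnorm = ⨆ i : Fin s, ∑ j, |D i j|) :
    linf (ztil - z) ≤ Real.sqrt s * (εnq + εmdl) * σ⁻¹ * Dnorm := by
  have : Nonempty (Fin k) := ⟨⟨0, hk⟩⟩
  rw [linf_eq_norm] at ht he ⊢
  rw [hz, hσ, hDnorm, sInf_l2norm_mulVec_eq_sigmaMin]
  refine (norm_le_norm_toLp 2 _).trans ?_
  simpa only [linfty_opNorm_eq_iSup, Real.norm_eq_abs, conjTranspose_eq_transpose_of_trivial,
    Fintype.card_fin] using
    stmt14_general A S (linfty_opNorm_le_one_of_rows_single hS) D hB hBinv z t e ht he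
end
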